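/- For k ≥ 1, the number of self-dual modern Tamari intervals of size 2k equals (2^{k-1}/(k+1)) · C(2k, k), and for k ≥ 0 the number of self-dual modern Tamari intervals of size 2k+1 equals (2^k/(k+1)) · C(2k, k). -/

import Mathlib

/-- Binary trees: a leaf or a binary node with two subtrees. -/
inductive BT : Type
  | leaf : BT
  | node : BT → BT → BT

namespace BT

/-- Number of binary (internal) nodes. -/
def size : BT → ℕ
  | leaf => 0
  | node l r => l.size + r.size + 1

/-- One right rotation somewhere in the tree: ((A,B),C) ↦ (A,(B,C)). -/
inductive Rot : BT → BT → Prop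
  | rotate (A B C : BT) : Rot (node (node A B) C) (node A (node B C))
  | left {l l' : BT} (r : BT) : Rot l l' → Rot (node l r) (node l' r)
  | right (l : BT) {r r' : BT} : Rot r r' → Rot (node l r) (node l r')

/-- Tamari order: reflexive-transitive closure of right rotation. -/
def tle (T T' : BT) : Prop := Relation.ReflTransGen Rot T T'

/-- Bracket-vector: sizes of right subtrees of nodes, in infix order. -/
def bracket : BT → List ℕ
  | leaf => []
  | node l r => bracket l ++ r.size :: bracket r

/-- Dual bracket-vector: sizes of left subtrees of nodes, in infix order. -/
def dualBracket : BT → List ℕ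
  | leaf => []
  | node l r => dualBracket l ++ l.size :: dualBracket r

/-- Canopy word: for each leaf (left to right), 1 if it is a left child, 0 if a right child;
the argument `b` is the value assigned to the tree if it is itself a leaf. -/
def canopyAux (b : ℕ) : BT → List ℕ
  | leaf => [b]
  | node l r => canopyAux 1 l ++ canopyAux 0 r

/-- Canopy-vector of a binary tree. -/
def canopy (T : BT) : List ℕ := canopyAux 1 T

/-- Left-right mirror. -/
def mir : BT → BT
  | leaf => leaf
  | node l r => node (mir r) (mir l)

/-- Tamari interval of size n. -/
def interval (p : BT × BT) (n : ℕ) : Prop :=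
  p.1.size = n ∧ p.2.size = n ∧ tle p.1 p.2

/-- Tamari interval (of unspecified size). -/
def isInt (p : BT × BT) : Prop := p.1.size = p.2.size ∧ tle p.1 p.2

/-- The rise operation (T,T') ↦ ((T,ε),(ε,T')). -/
def riseF (p : BT × BT) : BT × BT := (node p.1 leaf, node leaf p.2)

/-- An interval is modern when its rise is again an interval. -/
def modern (p : BT × BT) : Prop := tle (node p.1 leaf) (node leaf p.2)

/-- Infinitely modern: every iterated rise is an interval. -/
def infModern (p : BT × BT) : Prop :=
  ∀ k : ℕ, tle ((riseF^[k] p).1) ((riseF^[k] p).2)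

/-- Synchronized: equal canopies. -/
def synced (p : BT × BT) : Prop := canopy p.1 = canopy p.2

/-- Self-dual: equal to its dual (mir T', mir T). -/
def selfDual (p : BT × BT) : Prop := mir p.2 = p.1 ∧ mir p.1 = p.2

/-- Number of positions where the two canopies agree. -/
def agreeCount (p : BT × BT) : ℕ :=
  ((List.range (p.1.size + 1)).filter
    (fun i => (canopy p.1).getD i 0 == (canopy p.2).getD i 0)).length

/-- Number of canopy positions of joint type (a on top, b on bottom), for an interval (T,T')
with T' the upper tree. -/
def typeCount (a b : ℕ) (p : BT × BT) : ℕ :=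
  ((List.range (p.1.size + 1)).filter
    (fun i => ((canopy p.2).getD i 0 == a) && ((canopy p.1).getD i 0 == b))).length

end BT

/-!
A self-dual interval is a pair `(T, mir T)`. Bracket vectors turn the conditions that it be an
interval and that it be modern into inequalities between the entries for `T` and those for `mir T`,
and these inequalities show that every such tree of size `n + 2` arises exactly once from one of
size `n` by inserting a last node, with left subtree of size `y`, and then a first node, with right
subtree of size `x`. Both sizes range over those of the left subtrees along the left branch of the
smaller tree and that of the tree itself. Which pairs `(x, y)` are admissible, and what becomes of
the left branch, depends only on a word of booleans along it, so that the trees are the nodes of a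
generating tree on words.

The kernel method, with the length of the word as catalytic variable, gives the series
`t = 1 + 2 z t ^ 2` for odd sizes (root `[false]`) and `s = 1 + z t ^ 2` for even sizes (root `[]`).
Its kernel involves the series of a second succession rule, `openStep 0`, which describes what the
moves ending at or before a letter `true` do to the letters in front of it.
-/

namespace BT

/-! ### Bracket vectors and the Tamari order -/

@[simp] lemma length_bracket (T : BT) : T.bracket.length = T.size := by
  induction T with
  | leaf => rfl
  | node l r ihl ihr => simp [bracket, size, ihl, ihr, add_assoc]

/-- The `i`-th entry of the bracket vector, extended by `0` past its end. -/
def bracketAt (T : BT) (i : ℕ) : ℕ := T.bracket.getD i 0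

lemma bracketAt_eq_zero {T : BT} {i : ℕ} (h : T.size ≤ i) : bracketAt T i = 0 :=
  List.getD_eq_default _ _ (by simpa using h)

lemma bracketAt_node_left {l : BT} (r : BT) {i : ℕ} (h : i < l.size) :
    bracketAt (node l r) i = bracketAt l i :=
  List.getD_append _ _ _ _ (by simpa using h)

lemma bracketAt_node_root (l r : BT) : bracketAt (node l r) l.size = r.size := by
  simp [bracketAt, bracket]

lemma bracketAt_node_right (l r : BT) (j : ℕ) :
    bracketAt (node l r) (l.size + 1 + j) = bracketAt r j := by
  simp [bracketAt, bracket, List.getElem?_append_right, add_assoc, add_comm 1 j]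

lemma add_bracketAt_lt {T : BT} {i : ℕ} (hi : i < T.size) : i + bracketAt T i < T.size := by
  induction T generalizing i with
  | leaf => exact absurd hi (Nat.not_lt_zero i)
  | node l r ihl ihr =>
    simp only [size] at hi ⊢
    rcases lt_trichotomy i l.size with h | rfl | h
    · rw [bracketAt_node_left r h]
      have := ihl h
      omega
    · rw [bracketAt_node_root]
      omega
    · obtain ⟨j, rfl⟩ := Nat.exists_eq_add_of_le (Nat.succ_le_of_lt h)
      have := ihr (i := j) (by omega)
      rw [bracketAt_node_right]
      omega

lemma add_bracketAt_le_of_le {T : BT} {i j : ℕ} (hij : i < j) (hj : j ≤ i + bracketAt T i) :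
    j + bracketAt T j ≤ i + bracketAt T i := by
  induction T generalizing i j with
  | leaf => simp [bracketAt, bracket] at hj; omega
  | node l r ihl ihr =>
    rcases lt_trichotomy i l.size with h | rfl | h
    · rw [bracketAt_node_left r h] at hj ⊢
      have hlt := add_bracketAt_lt h
      rw [bracketAt_node_left r (by omega)]
      exact ihl hij hj
    · obtain ⟨j, rfl⟩ := Nat.exists_eq_add_of_le (Nat.succ_le_of_lt hij)
      rw [bracketAt_node_root] at hj ⊢
      rw [bracketAt_node_right]
      have := add_bracketAt_lt (T := r) (i := j) (by omega)
      omega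
    · obtain ⟨i, rfl⟩ := Nat.exists_eq_add_of_le (Nat.succ_le_of_lt h)
      obtain ⟨j, rfl⟩ := Nat.exists_eq_add_of_le (Nat.succ_le_of_lt (h.trans hij))
      rw [bracketAt_node_right] at hj ⊢
      rw [bracketAt_node_right]
      have := ihr (i := i) (j := j) (by omega) (by omega)
      omega

lemma Rot.size_eq {T T' : BT} (h : Rot T T') : T.size = T'.size := by
  induction h <;> simp only [size] <;> omega

lemma Rot.forall₂_bracket_le {T T' : BT} (h : Rot T T') :
    List.Forall₂ (· ≤ ·) T.bracket T'.bracket := by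
  induction h with
  | rotate A B C =>
    simp only [bracket, size, List.append_assoc, List.cons_append]
    exact List.rel_append (List.forall₂_refl _) (.cons (by omega) (List.forall₂_refl _))
  | left r _ ih => exact List.rel_append ih (List.forall₂_refl _)
  | right l h ih => exact List.rel_append (List.forall₂_refl _) (.cons h.size_eq.le ih)

lemma Rot.bracketAt_le {T T' : BT} (h : Rot T T') (i : ℕ) : bracketAt T i ≤ bracketAt T' i := by
  rcases lt_or_ge i T.size with hi | hi
  · have hi' : i < T'.size := h.size_eq ▸ hi
    simpa [bracketAt, hi, hi'] using
      (List.forall₂_iff_get.mp h.forall₂_bracket_le).2 i (by simpa) (by simpa)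
  · simp [bracketAt_eq_zero hi]

lemma tle.size_eq {T T' : BT} (h : tle T T') : T.size = T'.size := by
  induction h with
  | refl => rfl
  | tail _ hr ih => exact ih.trans hr.size_eq

lemma tle.bracketAt_le {T T' : BT} (h : tle T T') (i : ℕ) : bracketAt T i ≤ bracketAt T' i := by
  induction h with
  | refl => rfl
  | tail _ hr ih => exact ih.trans (hr.bracketAt_le i)

lemma tle.node {l l' r r' : BT} (hl : tle l l') (hr : tle r r') : tle (node l r) (node l' r') :=
  .trans (hl.lift (BT.node · r) fun _ _ ↦ .left r) (hr.lift (BT.node l') fun _ _ ↦ .right l')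

lemma exists_tle_node {T : BT} {p : ℕ} (hp : p < T.size) (h : ∀ i < p, i + bracketAt T i < p) :
    ∃ l r m, tle T (node l r) ∧ l.size = p ∧ T.bracket = l.bracket ++ m :: r.bracket := by
  induction T with
  | leaf => exact absurd hp (Nat.not_lt_zero p)
  | node a c iha _ =>
    rcases lt_trichotomy p a.size with hpa | rfl | hpa
    · obtain ⟨l, r, m, hle, hl, hm⟩ := iha hpa fun i hi ↦ by
        simpa only [bracketAt_node_left c (hi.trans hpa)] using h i hi
      refine ⟨l, .node r c, m, ?_, hl, by simp [bracket, hm]⟩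
      exact (hle.node .refl).tail (.rotate l r c)
    · exact ⟨a, c, _, .refl, rfl, rfl⟩
    · have := h _ hpa
      rw [bracketAt_node_root] at this
      simp only [size] at hp
      omega

lemma tle_of_bracketAt_le {T T' : BT} (hs : T.size = T'.size)
    (h : ∀ i, bracketAt T i ≤ bracketAt T' i) : tle T T' := by
  induction T' generalizing T with
  | leaf => cases T with
    | leaf => exact .refl
    | node l r => simp [size] at hs
  | node l' r' ihl ihr =>
    obtain ⟨l, r, m, hle, hl, hm⟩ : ∃ l r m, tle T (.node l r) ∧ l.size = l'.size ∧
        T.bracket = l.bracket ++ m :: r.bracket := by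
      refine exists_tle_node (by simp only [hs, size]; omega) fun i hi ↦ ?_
      have := h i
      rw [bracketAt_node_left r' hi] at this
      have := add_bracketAt_lt hi
      omega
    have hsr : r.size = r'.size := by
      have := hle.size_eq
      simp only [size] at hs this
      omega
    refine hle.trans (tle.node (ihl hl fun i ↦ ?_) (ihr hsr fun i ↦ ?_))
    · rcases lt_or_ge i l.size with hi | hi
      · have := h i
        rwa [bracketAt_node_left r' (hl ▸ hi), bracketAt, hm,
          List.getD_append _ _ _ _ (by simpa)] at this
      · simp [bracketAt_eq_zero hi]
    · have := h (l'.size + 1 + i)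
      rw [bracketAt_node_right] at this
      simpa [bracketAt, hm, ← hl, List.getElem?_append_right, add_assoc, add_comm 1 i] using this

lemma tle_iff_bracketAt_le {T T' : BT} (hs : T.size = T'.size) :
    tle T T' ↔ ∀ i, bracketAt T i ≤ bracketAt T' i :=
  ⟨fun h ↦ h.bracketAt_le, tle_of_bracketAt_le hs⟩

lemma size_left_le_of_bracket_eq {l r l' r' : BT}
    (h : (node l r).bracket = (node l' r').bracket) : l'.size ≤ l.size := by
  by_contra! hlt
  have hs : (node l r).size = (node l' r').size := by simpa using congrArg List.length h
  have hb : bracketAt (node l r) l.size = bracketAt (node l' r') l.size := by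
    rw [bracketAt, h, bracketAt]
  rw [bracketAt_node_root, bracketAt_node_left r' hlt] at hb
  have := add_bracketAt_lt hlt
  simp only [size] at hs
  omega

lemma bracket_injective : Function.Injective bracket := by
  intro T T' h
  induction T generalizing T' with
  | leaf => cases T' with
    | leaf => rfl
    | node l r => simp [bracket] at h
  | node l r ihl ihr => cases T' with
    | leaf => simp [bracket] at h
    | node l' r' =>
      have hl : l.size = l'.size :=
        (size_left_le_of_bracket_eq h.symm).antisymm (size_left_le_of_bracket_eq h)
      obtain ⟨hbl, hbr⟩ := List.append_inj h (by simpa using hl)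
      rw [ihl hbl, ihr (List.cons.inj hbr).2]

/-! ### Left and right branches -/

@[simp] lemma size_mir (T : BT) : (mir T).size = T.size := by
  induction T with
  | leaf => rfl
  | node l r ihl ihr => simp only [mir, size, ihl, ihr, add_comm r.size]

@[simp] lemma mir_mir (T : BT) : mir (mir T) = T := by
  induction T with
  | leaf => rfl
  | node l r ihl ihr => simp only [mir, ihl, ihr]

lemma mir_injective : Function.Injective mir :=
  Function.LeftInverse.injective mir_mir

/-- Sizes of the left subtrees of the nodes of the left branch, from the bottom up; these are also
the infix positions of those nodes. -/
def leftSizes : BT → List ℕ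
  | leaf => []
  | node l _ => leftSizes l ++ [l.size]

/-- Possible sizes of the right subtree of a node inserted before all nodes of `T`. -/
def leftSlots (T : BT) : List ℕ := leftSizes T ++ [T.size]

/-- Sizes of the right subtrees of the nodes of the right branch, from the bottom up. -/
def rightSizes (T : BT) : List ℕ := leftSizes (mir T)

/-- Possible sizes of the left subtree of a node inserted after all nodes of `T`. -/
def rightSlots (T : BT) : List ℕ := leftSlots (mir T)

lemma leftSizes_node (l r : BT) : leftSizes (node l r) = leftSlots l := rfl

lemma rightSizes_node (l r : BT) : rightSizes (node l r) = rightSlots r := rfl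

lemma rightSlots_eq (T : BT) : rightSlots T = rightSizes T ++ [T.size] := by
  rw [rightSlots, leftSlots, size_mir, rightSizes]

lemma mem_leftSizes {T : BT} {s : ℕ} :
    s ∈ leftSizes T ↔ s < T.size ∧ ∀ i < s, i + bracketAt T i < s := by
  induction T with
  | leaf => simp [leftSizes, size]
  | node l r ihl _ =>
    simp only [leftSizes, List.mem_append, List.mem_singleton, ihl, size]
    refine ⟨?_, fun ⟨_, h⟩ ↦ ?_⟩
    · rintro (⟨hs, h⟩ | rfl)
      · refine ⟨by omega, fun i hi ↦ ?_⟩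
        simpa only [bracketAt_node_left r (hi.trans hs)] using h i hi
      · refine ⟨by omega, fun i hi ↦ ?_⟩
        simpa only [bracketAt_node_left r hi] using add_bracketAt_lt hi
    · rcases lt_trichotomy s l.size with hsl | hsl | hsl
      · refine .inl ⟨hsl, fun i hi ↦ ?_⟩
        simpa only [bracketAt_node_left r (hi.trans hsl)] using h i hi
      · exact .inr hsl
      · have := h _ hsl
        rw [bracketAt_node_root] at this
        omega

lemma lt_size_of_mem_leftSizes {T : BT} {s : ℕ} (h : s ∈ leftSizes T) : s < T.size :=
  (mem_leftSizes.mp h).1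

lemma le_size_of_mem_leftSlots {T : BT} {s : ℕ} (h : s ∈ leftSlots T) : s ≤ T.size :=
  Nat.lt_succ_iff.mp (lt_size_of_mem_leftSizes (T := node T leaf) h)

lemma le_size_of_mem_rightSlots {T : BT} {s : ℕ} (h : s ∈ rightSlots T) : s ≤ T.size := by
  simpa using le_size_of_mem_leftSlots h

lemma sortedLT_leftSizes (T : BT) : (leftSizes T).SortedLT := by
  induction T with
  | leaf => simp [leftSizes, List.sortedLT_iff_pairwise]
  | node l r ihl _ =>
    rw [List.sortedLT_iff_pairwise] at ihl ⊢
    simpa [leftSizes, List.pairwise_append, ihl] using fun s ↦ lt_size_of_mem_leftSizes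

lemma sortedLT_leftSlots (T : BT) : (leftSlots T).SortedLT :=
  sortedLT_leftSizes (node T leaf)

lemma mem_rightSizes {T : BT} {s : ℕ} :
    s ∈ rightSizes T ↔ ∃ i, i + s + 1 = T.size ∧ bracketAt T i = s := by
  induction T with
  | leaf => simp [rightSizes, mir, leftSizes, size]
  | node l r _ ihr =>
    simp only [rightSizes_node, rightSlots_eq, List.mem_append, List.mem_singleton, ihr, size]
    refine ⟨?_, fun ⟨i, hi, hb⟩ ↦ ?_⟩
    · rintro (⟨i, hi, hb⟩ | rfl)
      · exact ⟨l.size + 1 + i, by omega, by rw [bracketAt_node_right, hb]⟩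
      · exact ⟨l.size, by omega, bracketAt_node_root l r⟩
    · rcases lt_trichotomy i l.size with h | rfl | h
      · rw [bracketAt_node_left r h] at hb
        have := add_bracketAt_lt h
        omega
      · exact .inr (by omega)
      · obtain ⟨j, rfl⟩ := Nat.exists_eq_add_of_le (Nat.succ_le_of_lt h)
        rw [bracketAt_node_right] at hb
        exact .inl ⟨j, by omega, hb⟩

lemma tle.rightSizes_subset {T T' : BT} (h : tle T T') : rightSizes T ⊆ rightSizes T' := by
  intro s hs
  obtain ⟨i, hi, hb⟩ := mem_rightSizes.mp hs
  have := h.bracketAt_le i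
  have := h.size_eq
  have := add_bracketAt_lt (T := T') (i := i) (by omega)
  exact mem_rightSizes.mpr ⟨i, by omega, by omega⟩

lemma rightSizes_subset_leftSizes {T : BT} (h : tle T (mir T)) : rightSizes T ⊆ leftSizes T := by
  simpa only [rightSizes, mir_mir] using h.rightSizes_subset

/-! ### Inserting a first or a last node -/

/-- Insert a node before all nodes of `T`, with right subtree of size `x`
(meaningful only for `x ∈ leftSlots T`). -/
def insertFirst (x : ℕ) : BT → BT
  | leaf => node leaf leaf
  | node l r => if (node l r).size = x then node leaf (node l r) else node (insertFirst x l) r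

/-- Insert a node after all nodes of `T`, with left subtree of size `y`
(meaningful only for `y ∈ rightSlots T`). -/
def insertLast (y : ℕ) (T : BT) : BT := mir (insertFirst y (mir T))

@[simp] lemma size_insertFirst (x : ℕ) (T : BT) : (insertFirst x T).size = T.size + 1 := by
  induction T with
  | leaf => rfl
  | node l r ihl _ =>
    rw [insertFirst]
    split_ifs
    · simp [size]
    · simp only [size, ihl]
      omega

@[simp] lemma size_insertLast (y : ℕ) (T : BT) : (insertLast y T).size = T.size + 1 := by
  simp [insertLast]

lemma insertFirst_size (T : BT) : insertFirst T.size T = node leaf T := by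
  cases T with
  | leaf => rfl
  | node l r => exact if_pos rfl

lemma insertFirst_node {x : ℕ} {l : BT} (hx : x ∈ leftSlots l) (r : BT) :
    insertFirst x (node l r) = node (insertFirst x l) r := by
  have := le_size_of_mem_leftSlots hx
  exact if_neg (by simp only [size]; omega)

lemma insertLast_size (T : BT) : insertLast T.size T = node T leaf := by
  rw [insertLast, ← size_mir, insertFirst_size, mir, mir_mir, mir]

lemma insertLast_node {y : ℕ} {r : BT} (l : BT) (hy : y ∈ rightSlots r) :
    insertLast y (node l r) = node l (insertLast y r) := by
  rw [insertLast, mir, insertFirst_node hy, mir, mir_mir, insertLast]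

lemma mir_insertFirst (x : ℕ) (T : BT) : mir (insertFirst x T) = insertLast x (mir T) := by
  rw [insertLast, mir_mir]

lemma mir_insertLast (y : ℕ) (T : BT) : mir (insertLast y T) = insertFirst y (mir T) :=
  mir_mir _

lemma bracket_insertFirst {x : ℕ} {T : BT} (hx : x ∈ leftSlots T) :
    (insertFirst x T).bracket = x :: T.bracket := by
  induction T with
  | leaf => simpa [leftSlots, leftSizes, size, eq_comm, bracket, insertFirst] using hx
  | node l r ihl _ =>
    rcases List.mem_append.mp hx with h | h
    · rw [insertFirst_node h, bracket, ihl h, bracket, List.cons_append]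
    · rw [List.mem_singleton.mp h, insertFirst_size, bracket, bracket, List.nil_append]

lemma bracketAt_insertFirst_zero {x : ℕ} {T : BT} (hx : x ∈ leftSlots T) :
    bracketAt (insertFirst x T) 0 = x := by
  simp [bracketAt, bracket_insertFirst hx]

lemma bracketAt_insertFirst_succ {x : ℕ} {T : BT} (hx : x ∈ leftSlots T) (i : ℕ) :
    bracketAt (insertFirst x T) (i + 1) = bracketAt T i := by
  simp [bracketAt, bracket_insertFirst hx]

lemma insertFirst_inj {x x' : ℕ} {T T' : BT} (hx : x ∈ leftSlots T) (hx' : x' ∈ leftSlots T') :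
    insertFirst x T = insertFirst x' T' ↔ x = x' ∧ T = T' := by
  rw [← bracket_injective.eq_iff, bracket_insertFirst hx, bracket_insertFirst hx',
    List.cons.injEq, bracket_injective.eq_iff]

lemma insertLast_inj {y y' : ℕ} {T T' : BT} (hy : y ∈ rightSlots T) (hy' : y' ∈ rightSlots T') :
    insertLast y T = insertLast y' T' ↔ y = y' ∧ T = T' := by
  rw [insertLast, insertLast, mir_injective.eq_iff, insertFirst_inj hy hy',
    mir_injective.eq_iff]

lemma exists_insertFirst {S : BT} (hS : S ≠ leaf) :
    ∃ T, ∃ x ∈ leftSlots T, insertFirst x T = S := by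
  induction S with
  | leaf => exact absurd rfl hS
  | node l r ihl _ =>
    by_cases hl : l = leaf
    · exact ⟨r, r.size, by simp [leftSlots], by rw [insertFirst_size, hl]⟩
    · obtain ⟨T, x, hx, rfl⟩ := ihl hl
      exact ⟨node T r, x, List.mem_append_left _ hx, insertFirst_node hx r⟩

lemma exists_insertLast {S : BT} (hS : S ≠ leaf) :
    ∃ T, ∃ y ∈ rightSlots T, insertLast y T = S := by
  obtain ⟨T, y, hy, h⟩ := exists_insertFirst (S := mir S) (mir_injective.ne (a₂ := leaf) hS)
  exact ⟨mir T, y, by rwa [rightSlots, mir_mir], by rw [insertLast, mir_mir, h, mir_mir]⟩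

lemma leftSizes_insertFirst {x : ℕ} {T : BT} (hx : x ∈ leftSlots T) :
    leftSizes (insertFirst x T) = 0 :: ((leftSizes T).filter (x ≤ ·)).map (· + 1) := by
  induction T with
  | leaf => rfl
  | node l r ihl _ =>
    rcases List.mem_append.mp hx with h | h
    · have := le_size_of_mem_leftSlots h
      simp [insertFirst_node h, leftSizes, ihl h, this]
    · rw [List.mem_singleton.mp h, insertFirst_size, List.filter_eq_nil_iff.mpr]
      · rfl
      · simpa using fun s ↦ lt_size_of_mem_leftSizes

lemma leftSizes_insertLast {y : ℕ} {T : BT} (hy : y ∈ rightSizes T) :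
    leftSizes (insertLast y T) = leftSizes T := by
  cases T with
  | leaf => simp [rightSizes, mir, leftSizes] at hy
  | node l r => rw [insertLast_node l hy, leftSizes_node, leftSizes_node]

lemma rightSizes_insertFirst {x : ℕ} {T : BT} (hx : x ∈ leftSizes T) :
    rightSizes (insertFirst x T) = rightSizes T := by
  rw [rightSizes, mir_insertFirst, leftSizes_insertLast (by rwa [rightSizes, mir_mir]), rightSizes]

lemma bracketAt_node_leaf (T : BT) (i : ℕ) : bracketAt (node T leaf) i = bracketAt T i := by
  rcases lt_or_ge i T.size with h | h
  · exact bracketAt_node_left leaf h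
  · rw [bracketAt_eq_zero h]
    obtain rfl | h := h.eq_or_lt
    · exact bracketAt_node_root T leaf
    · exact bracketAt_eq_zero h

/-- Exactly the nodes of the right branch whose right subtree has size at least `y` are raised. -/
lemma bracketAt_insertLast {y : ℕ} {T : BT} (hy : y ∈ rightSlots T) (i : ℕ) :
    bracketAt (insertLast y T) i =
      bracketAt T i + if i + bracketAt T i + 1 = T.size ∧ i + y < T.size then 1 else 0 := by
  induction T generalizing i with
  | leaf =>
    obtain rfl : y = leaf.size := by simpa [rightSlots, mir, leftSlots, leftSizes] using hy
    rw [insertLast_size, bracketAt_node_leaf, if_neg (by simp [size]), add_zero]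
  | node l r _ ihr =>
    rw [rightSlots_eq, rightSizes_node] at hy
    rcases List.mem_append.mp hy with h | h
    · have hyr := le_size_of_mem_rightSlots h
      rw [insertLast_node l h, size]
      rcases lt_trichotomy i l.size with hi | rfl | hi
      · have := add_bracketAt_lt hi
        rw [bracketAt_node_left _ hi, bracketAt_node_left _ hi, if_neg (by omega), add_zero]
      · rw [bracketAt_node_root, bracketAt_node_root, size_insertLast, if_pos (by omega)]
      · obtain ⟨j, rfl⟩ := Nat.exists_eq_add_of_le (Nat.succ_le_of_lt hi)
        rw [bracketAt_node_right, bracketAt_node_right, ihr h]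
        congr 2
        exact propext (by omega)
    · rw [List.mem_singleton.mp h, insertLast_size, bracketAt_node_leaf, if_neg (by omega),
        add_zero]

/-! ### Self-dual modern intervals under insertion -/

lemma modern_iff_bracketAt_le {T T' : BT} (hs : T.size = T'.size) :
    modern (T, T') ↔ ∀ i, bracketAt T (i + 1) ≤ bracketAt T' i := by
  have hsucc (i : ℕ) : bracketAt (node leaf T') (i + 1) = bracketAt T' i := by
    simpa [size, add_comm] using bracketAt_node_right leaf T' i
  have hzero : bracketAt T 0 ≤ bracketAt (node leaf T') 0 := by
    rcases T.size.eq_zero_or_pos with h | h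
    · simp [bracketAt_eq_zero h.le]
    · have := add_bracketAt_lt h
      have : bracketAt (node leaf T') 0 = T'.size := bracketAt_node_root leaf T'
      omega
  rw [modern, tle_iff_bracketAt_le (by simp [size, hs]), ← Nat.and_forall_add_one]
  simp only [bracketAt_node_leaf, hsucc, hzero, true_and]

lemma tle_mir_iff {T : BT} : tle T (mir T) ↔ ∀ i, bracketAt T i ≤ bracketAt (mir T) i :=
  tle_iff_bracketAt_le (size_mir T).symm

lemma modern_mir_iff {T : BT} :
    modern (T, mir T) ↔ ∀ i, bracketAt T (i + 1) ≤ bracketAt (mir T) i :=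
  modern_iff_bracketAt_le (size_mir T).symm

lemma bracketAt_bounds (T : BT) (i : ℕ) :
    (i < T.size ∧ i + bracketAt T i < T.size) ∨ (T.size ≤ i ∧ bracketAt T i = 0) :=
  (lt_or_ge i T.size).imp (fun h ↦ ⟨h, add_bracketAt_lt h⟩) fun h ↦ ⟨h, bracketAt_eq_zero h⟩

/-- Insert a last node with left subtree of size `y`, then a first node with right subtree of
size `x`. -/
def extend (x y : ℕ) (T : BT) : BT := insertFirst x (insertLast y T)

@[simp] lemma size_extend (x y : ℕ) (T : BT) : (extend x y T).size = T.size + 2 := by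
  simp [extend]

section Extend

variable {x y : ℕ} {T : BT}

lemma mir_extend (x y : ℕ) (T : BT) :
    mir (extend x y T) = insertLast x (insertFirst y (mir T)) := by
  rw [extend, mir_insertFirst, mir_insertLast]

lemma bracketAt_extend_succ (hy : y ∈ rightSlots T) (hx : x ∈ leftSlots (insertLast y T)) (i : ℕ) :
    bracketAt (extend x y T) (i + 1) =
      bracketAt T i + if i + bracketAt T i + 1 = T.size ∧ i + y < T.size then 1 else 0 := by
  rw [extend, bracketAt_insertFirst_succ hx, bracketAt_insertLast hy]

lemma bracketAt_mir_extend_zero (hy : y ∈ rightSlots T) (hx : x ∈ leftSlots (insertLast y T)) :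
    bracketAt (mir (extend x y T)) 0 = y + if y = T.size ∧ x ≤ T.size then 1 else 0 := by
  rw [mir_extend, bracketAt_insertLast hx, bracketAt_insertFirst_zero hy, size_insertFirst,
    size_mir]
  congr 2
  exact propext (by omega)

lemma bracketAt_mir_extend_succ (hy : y ∈ rightSlots T) (hx : x ∈ leftSlots (insertLast y T))
    (i : ℕ) :
    bracketAt (mir (extend x y T)) (i + 1) = bracketAt (mir T) i +
      if i + bracketAt (mir T) i + 1 = T.size ∧ i + x < T.size then 1 else 0 := by
  rw [mir_extend, bracketAt_insertLast hx, bracketAt_insertFirst_succ hy, size_insertFirst,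
    size_mir]
  congr 2
  exact propext (by omega)

lemma tle_mir_extend_iff (hy : y ∈ rightSlots T) (hx : x ∈ leftSlots (insertLast y T)) :
    tle (extend x y T) (mir (extend x y T)) ↔
      tle T (mir T) ∧ x ≤ T.size ∧ (y = T.size ∨ x ≤ y) := by
  have hyT := le_size_of_mem_rightSlots hy
  rw [tle_mir_iff, ← Nat.and_forall_add_one, tle_mir_iff, and_comm]
  simp only [bracketAt_extend_succ hy hx, bracketAt_mir_extend_succ hy hx,
    bracketAt_mir_extend_zero hy hx, show bracketAt (extend x y T) 0 = x from
      bracketAt_insertFirst_zero hx]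
  have hzero : (x ≤ y + if y = T.size ∧ x ≤ T.size then 1 else 0) ↔
      x ≤ T.size ∧ (y = T.size ∨ x ≤ y) := by
    split_ifs <;> omega
  rw [hzero]
  refine and_congr_left fun hxy ↦ forall_congr' fun i ↦ ?_
  have hT := bracketAt_bounds T i
  have hmir := bracketAt_bounds (mir T) i
  rw [size_mir] at hmir
  split_ifs <;> omega

lemma one_mem_leftSizes_iff : 1 ∈ leftSizes T ↔ 1 < T.size ∧ bracketAt T 0 = 0 := by
  simp [mem_leftSizes]

/-- At a raised node `i + 1`, the bracket at `i` of the mirror tree reaches the last node. -/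
lemma add_bracketAt_mir_of_modern (hle : tle T (mir T)) (hm : modern (T, mir T)) {i : ℕ}
    (hi : i + 1 + bracketAt T (i + 1) + 1 = T.size)
    (h0 : bracketAt T (i + 1) = 0 → 1 ∈ leftSizes T) :
    i + bracketAt (mir T) i + 1 = T.size := by
  have hmi := modern_mir_iff.mp hm i
  have hlt : i + bracketAt (mir T) i < T.size := by
    simpa using add_bracketAt_lt (T := mir T) (i := i) (by rw [size_mir]; omega)
  rcases (bracketAt T (i + 1)).eq_zero_or_pos with hb | hb
  · have h1 : 1 ∈ rightSizes (mir T) := by simpa only [rightSizes, mir_mir] using h0 hb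
    obtain ⟨j, hj, hbj⟩ := mem_rightSizes.mp h1
    rw [size_mir] at hj
    obtain rfl : j = i := by omega
    omega
  · have := tle_mir_iff.mp hle (i + 1)
    have := add_bracketAt_le_of_le (T := mir T) (Nat.lt_add_one i) (by omega)
    omega

lemma modern_extend_of_modern (hy : y ∈ rightSlots T) (hx : x ∈ leftSlots (insertLast y T))
    (hle : tle T (mir T)) (hxT : x ≤ T.size) (hm : modern (T, mir T))
    (h : y = T.size ∨ (y = 0 → 1 ∈ leftSizes T)) :
    modern (extend x y T, mir (extend x y T)) := by
  rw [modern_mir_iff, ← Nat.and_forall_add_one]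
  simp only [bracketAt_extend_succ hy hx, bracketAt_mir_extend_succ hy hx,
    bracketAt_mir_extend_zero hy hx]
  have hT0 := bracketAt_bounds T 0
  rw [rightSlots_eq, List.mem_append, List.mem_singleton] at hy
  obtain rfl | ⟨hyR, h1⟩ : y = T.size ∨ (y ∈ rightSizes T ∧ (y = 0 → 1 ∈ leftSizes T)) := by
    tauto
  · refine ⟨by split_ifs <;> omega, fun i ↦ ?_⟩
    have := modern_mir_iff.mp hm i
    split_ifs <;> omega
  · obtain ⟨hyT, hyL⟩ := mem_leftSizes.mp (rightSizes_subset_leftSizes hle hyR)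
    refine ⟨?_, fun i ↦ ?_⟩
    · rcases y.eq_zero_or_pos with rfl | hpos
      · obtain ⟨hT, hb⟩ := one_mem_leftSizes_iff.mp (h1 rfl)
        split_ifs <;> omega
      · have := hyL 0 hpos
        split_ifs <;> omega
    · have := modern_mir_iff.mp hm i
      by_cases hi : i + 1 + bracketAt T (i + 1) + 1 = T.size ∧ i + 1 + y < T.size
      · have := add_bracketAt_mir_of_modern hle hm hi.1 fun hb ↦ h1 (by omega)
        rw [if_pos hi]
        omega
      · rw [if_neg hi]
        omega

lemma modern_of_modern_extend (hy : y ∈ rightSlots T) (hx : x ∈ leftSlots (insertLast y T))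
    (h : modern (extend x y T, mir (extend x y T))) :
    modern (T, mir T) ∧ (y = T.size ∨ (y = 0 → 1 ∈ leftSizes T)) := by
  rw [modern_mir_iff, ← Nat.and_forall_add_one] at h
  simp only [bracketAt_extend_succ hy hx, bracketAt_mir_extend_succ hy hx,
    bracketAt_mir_extend_zero hy hx] at h
  refine ⟨modern_mir_iff.mpr fun i ↦ ?_, ?_⟩
  · have := h.2 i
    have hT := bracketAt_bounds T (i + 1)
    split_ifs at this <;> omega
  · have := le_size_of_mem_rightSlots hy
    have := h.1
    rw [one_mem_leftSizes_iff]
    split_ifs at this <;> omega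

/-- `T` is the lower tree of a self-dual modern interval, which is then `(T, mir T)`. -/
def IsSelfDualModern (T : BT) : Prop := tle T (mir T) ∧ modern (T, mir T)

lemma isSelfDualModern_extend_iff (hy : y ∈ rightSlots T) (hx : x ∈ leftSlots (insertLast y T)) :
    IsSelfDualModern (extend x y T) ↔ IsSelfDualModern T ∧ x ≤ T.size ∧
      (y = T.size ∨ x ≤ y ∧ (y = 0 → 1 ∈ leftSizes T)) := by
  rw [IsSelfDualModern, tle_mir_extend_iff hy hx, IsSelfDualModern]
  refine ⟨fun ⟨⟨_, _, hxy⟩, h⟩ ↦ ?_, fun ⟨⟨hle, hm⟩, hxT, hxy⟩ ↦ ?_⟩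
  · have := modern_of_modern_extend hy hx h
    tauto
  · have := modern_extend_of_modern hy hx hle hxT hm
    tauto

end Extend

/-- `Active T s`: some node may be inserted last, with left subtree of size `s < T.size`, into the
tree `T` of a self-dual modern interval. -/
def Active (T : BT) (s : ℕ) : Prop := s ∈ rightSizes T ∧ (s = 0 → 1 ∈ leftSizes T)

/-- `extend x y` leads from the tree `T` of a self-dual modern interval to another one. -/
def CanExtend (x y : ℕ) (T : BT) : Prop :=
  x ∈ leftSlots T ∧ y ∈ leftSlots T ∧ x ≤ y ∧ (y = T.size ∨ Active T y)

section CanExtend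

variable {x y : ℕ} {T : BT}

lemma Active.lt_size {s : ℕ} (h : Active T s) : s < T.size := by
  simpa using lt_size_of_mem_leftSizes h.1

lemma CanExtend.mem_rightSlots (h : CanExtend x y T) : y ∈ rightSlots T := by
  rw [rightSlots_eq, List.mem_append, List.mem_singleton]
  exact h.2.2.2.symm.imp_left And.left

lemma mem_leftSizes_of_lt {s : ℕ} (h : s ∈ leftSlots T) (hs : s < T.size) : s ∈ leftSizes T :=
  (List.mem_append.mp h).resolve_right (by simpa using hs.ne)

lemma CanExtend.mem_leftSizes (h : CanExtend x y T) : x ∈ leftSizes (insertLast y T) := by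
  obtain ⟨hx, -, hxy, rfl | hy⟩ := h
  · rwa [insertLast_size, leftSizes_node]
  · rw [leftSizes_insertLast hy.1]
    exact mem_leftSizes_of_lt hx (hxy.trans_lt hy.lt_size)

lemma CanExtend.mem_leftSlots (h : CanExtend x y T) : x ∈ leftSlots (insertLast y T) :=
  List.mem_append_left _ h.mem_leftSizes

lemma canExtend_of_mem_slots (hT : tle T (mir T)) (hy : y ∈ rightSlots T)
    (hx : x ∈ leftSlots (insertLast y T)) (hxT : x ≤ T.size)
    (h : y = T.size ∨ x ≤ y ∧ (y = 0 → 1 ∈ leftSizes T)) : CanExtend x y T := by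
  rw [rightSlots_eq, List.mem_append, List.mem_singleton] at hy
  rw [leftSlots, List.mem_append, List.mem_singleton, size_insertLast] at hx
  replace hx := hx.resolve_right (by omega)
  obtain rfl | ⟨hyR, hxy, h1⟩ : y = T.size ∨ y ∈ rightSizes T ∧ x ≤ y ∧ (y = 0 → 1 ∈ leftSizes T) :=
    by tauto
  · rw [insertLast_size] at hx
    exact ⟨hx, by simp [leftSlots], hxT, .inl rfl⟩
  · rw [leftSizes_insertLast hyR] at hx
    exact ⟨List.mem_append_left _ hx, List.mem_append_left _ (rightSizes_subset_leftSizes hT hyR),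
      hxy, .inr ⟨hyR, h1⟩⟩

lemma IsSelfDualModern.extend (hT : IsSelfDualModern T) (h : CanExtend x y T) :
    IsSelfDualModern (extend x y T) := by
  rw [isSelfDualModern_extend_iff h.mem_rightSlots h.mem_leftSlots]
  have := le_size_of_mem_leftSlots h.1
  exact ⟨hT, this, h.2.2.2.imp_right fun hy ↦ ⟨h.2.2.1, hy.2⟩⟩

lemma IsSelfDualModern.exists_extend {S : BT} (hS : IsSelfDualModern S) {n : ℕ}
    (hn : S.size = n + 2) :
    ∃ T, T.size = n ∧ IsSelfDualModern T ∧ ∃ x y, CanExtend x y T ∧ BT.extend x y T = S := by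
  have ne_leaf {U : BT} {m : ℕ} (hU : U.size = m + 1) : U ≠ leaf := by
    rintro rfl
    simp [size] at hU
  obtain ⟨T', x, hx, rfl⟩ := exists_insertFirst (ne_leaf hn)
  rw [size_insertFirst, Nat.succ_inj] at hn
  obtain ⟨T, y, hy, rfl⟩ := exists_insertLast (ne_leaf hn)
  rw [size_insertLast, Nat.succ_inj] at hn
  obtain ⟨hT, hxT, hxy⟩ := (isSelfDualModern_extend_iff hy hx).mp hS
  exact ⟨T, hn, hT, x, y, canExtend_of_mem_slots hT.1 hy hx hxT hxy, rfl⟩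

lemma CanExtend.extend_inj {x' y' : ℕ} {T' : BT} (h : CanExtend x y T) (h' : CanExtend x' y' T') :
    extend x y T = extend x' y' T' ↔ x = x' ∧ y = y' ∧ T = T' := by
  rw [extend, extend, insertFirst_inj h.mem_leftSlots h'.mem_leftSlots,
    insertLast_inj h.mem_rightSlots h'.mem_rightSlots]

lemma CanExtend.leftSizes_extend (h : CanExtend x y T) :
    leftSizes (BT.extend x y T) =
      0 :: ((leftSizes (insertLast y T)).filter (x ≤ ·)).map (· + 1) :=
  leftSizes_insertFirst h.mem_leftSlots

lemma CanExtend.rightSizes_extend (h : CanExtend x y T) :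
    rightSizes (BT.extend x y T) = 0 :: ((rightSizes T).filter (y ≤ ·)).map (· + 1) := by
  rw [BT.extend, rightSizes_insertFirst h.mem_leftSizes, rightSizes, mir_insertLast,
    leftSizes_insertFirst h.mem_rightSlots, rightSizes]

lemma CanExtend.active_extend_zero (h : CanExtend x y T) :
    Active (BT.extend x y T) 0 ↔ x = 0 := by
  have := h.mem_leftSizes
  simp only [Active, h.rightSizes_extend, h.leftSizes_extend]
  aesop

lemma CanExtend.active_extend_succ (h : CanExtend x y T) (s : ℕ) :
    Active (BT.extend x y T) (s + 1) ↔ s ∈ rightSizes T ∧ y ≤ s := by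
  simp [Active, h.rightSizes_extend]

end CanExtend

end BT

/-! ### Generating trees -/

section Descendants

variable {α β : Type*}

/-- Multiset of nodes at depth `k` below `a` in the generating tree with succession rule `step`. -/
def descendants (step : α → Multiset α) : ℕ → α → Multiset α
  | 0, a => {a}
  | k + 1, a => (step a).bind (descendants step k)

lemma descendants_succ' (step : α → Multiset α) (k : ℕ) (a : α) :
    descendants step (k + 1) a = (descendants step k a).bind step := by
  induction k generalizing a with
  | zero =>
    rw [descendants, descendants, Multiset.singleton_bind]
    exact (Multiset.bind_singleton _ id).trans (Multiset.map_id _)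
  | succ k ih =>
    rw [descendants, Multiset.bind_congr fun b _ ↦ ih b, ← Multiset.bind_assoc, descendants]

lemma map_descendants {step : α → Multiset α} {step' : β → Multiset β} {f : α → β}
    (h : ∀ a, (step a).map f = step' (f a)) (k : ℕ) (a : α) :
    (descendants step k a).map f = descendants step' k (f a) := by
  induction k generalizing a with
  | zero => simp [descendants]
  | succ k ih =>
    rw [descendants, Multiset.map_bind, Multiset.bind_congr fun b _ ↦ ih b, ← Multiset.bind_map,
      h, descendants]

lemma nodup_descendants {step : α → Multiset α} (hstep : ∀ a, (step a).Nodup)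
    (hdisj : ∀ ⦃a b c⦄, c ∈ step a → c ∈ step b → a = b) (k : ℕ) (a : α) :
    (descendants step k a).Nodup := by
  induction k with
  | zero => exact Multiset.nodup_singleton a
  | succ k ih =>
    rw [descendants_succ', Multiset.nodup_bind]
    exact ⟨fun b _ ↦ hstep b, ih.pairwise fun b _ c _ hbc ↦ Multiset.disjoint_left.mpr
      fun hb hc ↦ hbc (hdisj hb hc)⟩

end Descendants

/-- Positions `p ≤ q` in `w` such that the letter at position `q` is `true`. -/
def moves (w : List Bool) : Finset (ℕ × ℕ) :=
  (Finset.range w.length ×ˢ Finset.range w.length).filter fun m ↦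
    m.1 ≤ m.2 ∧ w[m.2]? = some true

lemma mem_moves {w : List Bool} {m : ℕ × ℕ} :
    m ∈ moves w ↔ m.1 ≤ m.2 ∧ w[m.2]? = some true := by
  simp only [moves, Finset.mem_filter, Finset.mem_product, Finset.mem_range,
    and_iff_right_iff_imp]
  intro ⟨hle, hm⟩
  have := (List.getElem?_eq_some_iff.mp hm).1
  omega

/-- The word obtained from `w` by the move `m`: the letters before position `m.1` become a single
letter, those from `m.1` to `m.2` become `false`, and the others are kept; a move to the end of `w`
adds `κ` letters `false`. -/
def nextWord (κ : ℕ) (w : List Bool) (m : ℕ × ℕ) : List Bool :=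
  decide (m.1 = 0) :: (List.replicate (m.2 - m.1) false ++
    if m.2 < w.length then w.drop m.2 else List.replicate κ false)

/-- Succession rule in which moves to the end of the word are allowed. -/
def openStep (κ : ℕ) (w : List Bool) : Multiset (List Bool) :=
  (moves (w ++ [true])).val.map (nextWord κ w)

section Sorted

variable {L : List ℕ} {p q : ℕ}

lemma lt_getElem_of_mem_take (hL : L.SortedLT) (hq : q < L.length) {a : ℕ} (ha : a ∈ L.take q) :
    a < L[q] := by
  obtain ⟨j, hj, rfl⟩ := List.mem_take_iff_getElem.mp ha
  exact hL.getElem_lt_getElem_iff.mpr (by omega)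

lemma getElem_le_of_mem_drop (hL : L.SortedLT) (hq : q < L.length) {a : ℕ} (ha : a ∈ L.drop q) :
    L[q] ≤ a := by
  obtain ⟨j, hj, rfl⟩ := List.mem_drop_iff_getElem.mp ha
  exact hL.getElem_le_getElem_iff.mpr (by omega)

lemma filter_getElem_le (hL : L.SortedLT) (hq : q < L.length) :
    L.filter (L[q] ≤ ·) = L.drop q := by
  have happ := List.filter_append (p := (L[q] ≤ ·)) (L.take q) (L.drop q)
  rw [L.take_append_drop q] at happ
  rw [happ, List.filter_eq_nil_iff.mpr fun a ha ↦ ?_, List.filter_eq_self.mpr fun a ha ↦ ?_,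
    List.nil_append]
  · exact decide_eq_true (getElem_le_of_mem_drop hL hq ha)
  · simpa using lt_getElem_of_mem_take hL hq ha

lemma map_filter_getElem_le (hL : L.SortedLT) (hpq : p ≤ q) (hq : q < L.length) {g : ℕ → Bool}
    (hg : ∀ a < L[q], g a = false) :
    (L.filter (L[p] ≤ ·)).map g = List.replicate (q - p) false ++ (L.drop q).map g := by
  have hsplit : L.drop p = (L.take q).drop p ++ L.drop q := by
    conv_lhs => rw [← L.take_append_drop q]
    exact List.drop_append_of_le_length (by rw [List.length_take]; omega)
  rw [filter_getElem_le hL, hsplit, List.map_append, List.eq_replicate_of_mem (a := false)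
    (l := ((L.take q).drop p).map g) ?_, List.length_map, List.length_drop, List.length_take,
    min_eq_left hq.le]
  simp only [List.mem_map]
  rintro _ ⟨a, ha, rfl⟩
  exact hg a (lt_getElem_of_mem_take hL hq (List.mem_of_mem_drop ha))

end Sorted

namespace BT

/-- The word of `T` records, from the bottom up, which sizes of left subtrees along the left branch
are active. -/
noncomputable def word (T : BT) : List Bool :=
  open Classical in (leftSizes T).map fun s ↦ decide (Active T s)

lemma leftSlots_getElem?_zero (T : BT) : (leftSlots T)[0]? = some 0 := by
  induction T with
  | leaf => rfl
  | node l r ihl _ =>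
    rw [leftSlots, leftSizes_node, List.getElem?_append_left (by simp [leftSlots]), ihl]

lemma length_word (T : BT) : (word T).length = (leftSizes T).length := List.length_map _

/-- The extension of `T` that corresponds to the move `m` on its word. -/
def grow (T : BT) (m : ℕ × ℕ) : BT :=
  extend ((leftSlots T).getD m.1 0) ((leftSlots T).getD m.2 0) T

open Classical in
lemma word_append_true (T : BT) :
    word T ++ [true] = (leftSlots T).map fun s ↦ decide (s = T.size ∨ Active T s) := by
  rw [leftSlots, List.map_append, word]
  congr 1
  · refine List.map_congr_left fun s hs ↦ ?_
    simp [(lt_size_of_mem_leftSizes hs).ne]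
  · simp

open Classical in
lemma word_extend {x y : ℕ} {T : BT} (h : CanExtend x y T) :
    word (extend x y T) = decide (x = 0) ::
      ((leftSizes (insertLast y T)).filter (x ≤ ·)).map
        fun s ↦ decide (s ∈ rightSizes T ∧ y ≤ s) := by
  simp only [word, h.leftSizes_extend, List.map_cons, List.map_map, h.active_extend_zero,
    Function.comp_def, h.active_extend_succ]

lemma length_leftSlots (T : BT) : (leftSlots T).length = (leftSizes T).length + 1 := by
  simp [leftSlots]

lemma getElem_leftSlots_eq_zero_iff {T : BT} {p : ℕ} (hp : p < (leftSlots T).length) :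
    (leftSlots T)[p] = 0 ↔ p = 0 := by
  obtain ⟨h0, hzero⟩ := List.getElem?_eq_some_iff.mp (leftSlots_getElem?_zero T)
  rw [← (sortedLT_leftSlots T).nodup.getElem_inj_iff (hi := hp) (hj := h0), hzero]

lemma mem_moves_word {T : BT} {m : ℕ × ℕ} :
    m ∈ moves (word T ++ [true]) ↔ m.1 ≤ m.2 ∧ ∃ h : m.2 < (leftSlots T).length,
      (leftSlots T)[m.2] = T.size ∨ Active T (leftSlots T)[m.2] := by
  simp only [mem_moves, word_append_true, List.getElem?_eq_some_iff, List.length_map,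
    List.getElem_map, decide_eq_true_eq]

lemma lt_length_of_mem_moves {T : BT} {m : ℕ × ℕ} (hm : m ∈ moves (word T ++ [true])) :
    m.1 < (leftSlots T).length ∧ m.2 < (leftSlots T).length := by
  obtain ⟨hle, h, -⟩ := mem_moves_word.mp hm
  exact ⟨hle.trans_lt h, h⟩

lemma grow_eq {T : BT} {m : ℕ × ℕ} (h₁ : m.1 < (leftSlots T).length)
    (h₂ : m.2 < (leftSlots T).length) :
    grow T m = extend (leftSlots T)[m.1] (leftSlots T)[m.2] T := by
  rw [grow, List.getD_eq_getElem _ _ h₁, List.getD_eq_getElem _ _ h₂]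

lemma canExtend_getElem {T : BT} {m : ℕ × ℕ} (hm : m ∈ moves (word T ++ [true]))
    (h₁ : m.1 < (leftSlots T).length) (h₂ : m.2 < (leftSlots T).length) :
    CanExtend (leftSlots T)[m.1] (leftSlots T)[m.2] T := by
  obtain ⟨hle, _, h⟩ := mem_moves_word.mp hm
  exact ⟨List.getElem_mem _, List.getElem_mem _,
    (sortedLT_leftSlots T).getElem_le_getElem_iff.mpr hle, h⟩

lemma CanExtend.exists_grow {x y : ℕ} {T : BT} (h : CanExtend x y T) :
    ∃ m ∈ moves (word T ++ [true]), grow T m = extend x y T := by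
  obtain ⟨hx, hy, hxy, h⟩ := h
  obtain ⟨p, hp, rfl⟩ := List.getElem_of_mem hx
  obtain ⟨q, hq, rfl⟩ := List.getElem_of_mem hy
  exact ⟨(p, q), mem_moves_word.mpr
    ⟨(sortedLT_leftSlots T).getElem_le_getElem_iff.mp hxy, hq, h⟩, grow_eq hp hq⟩

lemma word_extend_of_lt {T : BT} {p q : ℕ} (hpq : p ≤ q) (hq : q < (leftSizes T).length)
    (h : CanExtend (leftSizes T)[p] (leftSizes T)[q] T) :
    word (extend (leftSizes T)[p] (leftSizes T)[q] T) =
      decide ((leftSizes T)[p] = 0) :: (List.replicate (q - p) false ++ (word T).drop q) := by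
  have hy : Active T (leftSizes T)[q] :=
    h.2.2.2.resolve_left (lt_size_of_mem_leftSizes (List.getElem_mem hq)).ne
  rw [word_extend h, leftSizes_insertLast hy.1,
    map_filter_getElem_le (sortedLT_leftSizes T) hpq hq fun a ha ↦ by simp [ha], word,
    ← List.map_drop]
  refine congrArg (fun w ↦ _ :: (_ ++ w)) (List.map_congr_left fun s hs ↦ ?_)
  have hys := getElem_le_of_mem_drop (sortedLT_leftSizes T) hq hs
  have hzero (hs0 : s = 0) : 1 ∈ leftSizes T := hy.2 (Nat.le_zero.mp (hs0 ▸ hys))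
  exact decide_eq_decide.mpr ⟨fun h ↦ ⟨h.1, hzero⟩, fun h ↦ ⟨h.1, hys⟩⟩

lemma word_extend_size {T : BT} {p : ℕ} (hp : p < (leftSlots T).length) :
    word (extend (leftSlots T)[p] T.size T) = decide ((leftSlots T)[p] = 0) ::
      (List.replicate ((leftSizes T).length - p) false ++ [false]) := by
  have hlen := length_leftSlots T
  have hq : (leftSizes T).length < (leftSlots T).length := by omega
  have hsize : (leftSlots T)[(leftSizes T).length] = T.size := List.getElem_concat_length rfl _
  have hx := le_size_of_mem_leftSlots (List.getElem_mem hp)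
  have hsizeR : T.size ∉ rightSizes T := fun h ↦
    (lt_size_of_mem_leftSizes h).ne (size_mir T).symm
  rw [word_extend ⟨List.getElem_mem hp, by simp [leftSlots], hx, .inl rfl⟩, insertLast_size,
    leftSizes_node, map_filter_getElem_le (sortedLT_leftSlots T) (q := (leftSizes T).length)
      (by omega) hq fun a ha ↦ by simp [← hsize, ha]]
  simp [leftSlots, hsizeR]

lemma word_grow {T : BT} {m : ℕ × ℕ} (hm : m ∈ moves (word T ++ [true])) :
    word (grow T m) = nextWord 1 (word T) m := by
  obtain ⟨hp, hq⟩ := lt_length_of_mem_moves hm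
  have hle := (mem_moves_word.mp hm).1
  have hext := canExtend_getElem hm hp hq
  have hlen := length_leftSlots T
  rw [grow_eq hp hq, nextWord, length_word]
  simp only [← getElem_leftSlots_eq_zero_iff hp]
  have hget {i : ℕ} (hi : i < (leftSizes T).length) (hi' : i < (leftSlots T).length) :
      (leftSlots T)[i] = (leftSizes T)[i] := List.getElem_append_left hi
  obtain hlt | heq : m.2 < (leftSizes T).length ∨ m.2 = (leftSizes T).length := by omega
  · simp only [hget hlt, hget (hle.trans_lt hlt)] at hext ⊢
    rw [word_extend_of_lt hle hlt hext, if_pos hlt]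
  · have hsize : (leftSlots T)[m.2] = T.size := List.getElem_concat_length heq _
    rw [hsize, word_extend_size hp, if_neg heq.not_lt, heq, List.replicate_one]

/-- Extensions of `T`, one for each move on its word. -/
noncomputable def children (T : BT) : Multiset BT :=
  (moves (word T ++ [true])).val.map (grow T)

lemma map_word_children (T : BT) : (children T).map word = openStep 1 (word T) := by
  rw [children, Multiset.map_map, openStep]
  exact Multiset.map_congr rfl fun m hm ↦ word_grow hm

lemma mem_children {S T : BT} : S ∈ children T ↔ ∃ x y, CanExtend x y T ∧ extend x y T = S := by
  rw [children, Multiset.mem_map]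
  constructor
  · rintro ⟨m, hm, rfl⟩
    obtain ⟨hp, hq⟩ := lt_length_of_mem_moves hm
    exact ⟨_, _, canExtend_getElem hm hp hq, (grow_eq hp hq).symm⟩
  · rintro ⟨x, y, h, rfl⟩
    exact h.exists_grow

lemma nodup_children (T : BT) : (children T).Nodup := by
  refine (moves (word T ++ [true])).nodup.map_on fun m hm m' hm' h ↦ ?_
  obtain ⟨hp, hq⟩ := lt_length_of_mem_moves hm
  obtain ⟨hp', hq'⟩ := lt_length_of_mem_moves hm'
  rw [grow_eq hp hq, grow_eq hp' hq',
    (canExtend_getElem hm hp hq).extend_inj (canExtend_getElem hm' hp' hq'),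
    (sortedLT_leftSlots T).nodup.getElem_inj_iff,
    (sortedLT_leftSlots T).nodup.getElem_inj_iff] at h
  exact Prod.ext h.1 h.2.1

lemma eq_of_mem_children {S T T' : BT} (h : S ∈ children T) (h' : S ∈ children T') : T = T' := by
  obtain ⟨x, y, hxy, rfl⟩ := mem_children.mp h
  obtain ⟨x', y', hxy', heq⟩ := mem_children.mp h'
  exact ((hxy.extend_inj hxy').mp heq.symm).2.2

lemma isSelfDualModern_of_size_le_one {T : BT} (h : T.size ≤ 1) : IsSelfDualModern T := by
  have hzero (i : ℕ) : bracketAt T i = 0 := by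
    have := bracketAt_bounds T i
    omega
  exact ⟨tle_mir_iff.mpr fun i ↦ by simp [hzero], modern_mir_iff.mpr fun i ↦ by simp [hzero]⟩

lemma eq_of_size_le_one {T T' : BT} (h : T.size ≤ 1) (hs : T'.size = T.size) : T' = T := by
  rcases T with _ | ⟨_ | _, _ | _⟩ <;> rcases T' with _ | ⟨_ | _, _ | _⟩ <;>
    simp only [size] at h hs ⊢ <;> omega

lemma mem_descendants_children {T₀ : BT} (h₀ : T₀.size ≤ 1) (k : ℕ) (T : BT) :
    T ∈ descendants children k T₀ ↔ T.size = T₀.size + 2 * k ∧ IsSelfDualModern T := by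
  induction k generalizing T with
  | zero =>
    rw [descendants, Multiset.mem_singleton]
    refine ⟨?_, fun h ↦ eq_of_size_le_one h₀ h.1⟩
    rintro rfl
    exact ⟨rfl, isSelfDualModern_of_size_le_one h₀⟩
  | succ k ih =>
    rw [descendants_succ', Multiset.mem_bind]
    simp only [mem_children, ih]
    constructor
    · rintro ⟨T, ⟨hs, hT⟩, x, y, h, rfl⟩
      exact ⟨by rw [size_extend]; omega, hT.extend h⟩
    · rintro ⟨hs, hT⟩
      obtain ⟨U, hU, hUm, h⟩ := hT.exists_extend (n := T₀.size + 2 * k) (by omega)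
      exact ⟨U, ⟨hU, hUm⟩, h⟩

lemma ncard_selfDual_modern (n : ℕ) :
    {p : BT × BT | interval p n ∧ modern p ∧ selfDual p}.ncard =
      {T : BT | T.size = n ∧ IsSelfDualModern T}.ncard := by
  rw [← Set.ncard_image_of_injective {T : BT | T.size = n ∧ IsSelfDualModern T}
    (f := fun T ↦ (T, mir T)) fun T T' h ↦ congrArg Prod.fst h]
  congr 1
  ext ⟨T, T'⟩
  simp only [interval, selfDual, Set.mem_ofPred_eq, Set.mem_image, Prod.mk.injEq]
  constructor
  · rintro ⟨⟨hs, -, hle⟩, hm, -, rfl⟩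
    exact ⟨T, ⟨hs, hle, hm⟩, rfl, rfl⟩
  · rintro ⟨T, ⟨hs, hle, hm⟩, rfl, rfl⟩
    exact ⟨⟨hs, (size_mir T).trans hs, hle⟩, hm, mir_mir T, rfl⟩

lemma ncard_isSelfDualModern {T₀ : BT} (h₀ : T₀.size ≤ 1) (k : ℕ) :
    {T : BT | T.size = T₀.size + 2 * k ∧ IsSelfDualModern T}.ncard =
      (descendants (openStep 1) k (word T₀)).card := by
  have hnodup := nodup_descendants nodup_children (fun _ _ _ ↦ eq_of_mem_children) k T₀
  rw [← map_descendants map_word_children, Multiset.card_map,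
    ← Finset.card_mk (nodup := hnodup), ← Set.ncard_coe_finset]
  congr 1
  ext T
  simpa using (mem_descendants_children h₀ k T).symm

end BT

/-! ### Moves on words -/

/-- Succession rule in which moves to the end of the word are forbidden. -/
def closedStep (w : List Bool) : Multiset (List Bool) :=
  (moves w).val.map (nextWord 0 w)

lemma moves_append_replicate_false (w : List Bool) (b : ℕ) :
    moves (w ++ List.replicate b false) = moves w := by
  ext m
  rw [mem_moves, mem_moves, List.getElem?_append]
  refine and_congr_right fun _ ↦ ?_
  split_ifs with h
  · rfl
  · rw [List.getElem?_eq_none (not_lt.mp h), List.getElem?_replicate]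
    split_ifs <;> simp

lemma sum_moves_append_true {M : Type*} [AddCommMonoid M] (w : List Bool) (f : ℕ × ℕ → M) :
    ∑ m ∈ moves (w ++ [true]), f m =
      ∑ m ∈ moves w, f m + ∑ p ∈ Finset.range (w.length + 1), f (p, w.length) := by
  have hdisj : Disjoint (moves w) (Finset.range (w.length + 1) ×ˢ {w.length}) := by
    refine Finset.disjoint_left.mpr fun m hm hm' ↦ ?_
    have := (List.getElem?_eq_some_iff.mp (mem_moves.mp hm).2).1
    simp only [Finset.mem_product, Finset.mem_singleton] at hm'
    omega
  have hunion : moves (w ++ [true]) = moves w ∪ Finset.range (w.length + 1) ×ˢ {w.length} := by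
    ext m
    rw [Finset.mem_union, Finset.mem_product, mem_moves, mem_moves, Finset.mem_range,
      Finset.mem_singleton, List.getElem?_append]
    rcases lt_trichotomy m.2 w.length with h | h | h
    · simp [h, h.ne]
    · simp [h]
    · have : m.2 - w.length ≠ 0 := by omega
      simp [h.not_gt, h.ne', this]
  rw [hunion, Finset.sum_union hdisj, Finset.sum_product]
  simp only [Finset.sum_singleton]

lemma sum_map_openStep {M : Type*} [AddCommMonoid M] (κ : ℕ) (w : List Bool)
    (f : List Bool → M) :
    ((openStep κ w).map f).sum = ((closedStep w).map f).sum +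
      ∑ p ∈ Finset.range (w.length + 1),
        f (decide (p = 0) :: List.replicate (w.length - p + κ) false) := by
  simp only [openStep, closedStep, Multiset.map_map]
  refine (sum_moves_append_true w _).trans (congrArg₂ _ ?_ ?_)
  · refine Finset.sum_congr rfl fun m hm ↦ ?_
    have := (List.getElem?_eq_some_iff.mp (mem_moves.mp hm).2).1
    simp only [Function.comp_apply, nextWord, if_pos this]
  · simp only [Function.comp_apply, nextWord, lt_irrefl, if_false, List.replicate_append_replicate]

lemma map_append_openStep_zero (b : ℕ) (w : List Bool) :
    (openStep 0 w).map (· ++ true :: List.replicate b false) =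
      closedStep (w ++ true :: List.replicate b false) := by
  have hmoves : moves (w ++ true :: List.replicate b false) = moves (w ++ [true]) := by
    rw [← moves_append_replicate_false (w ++ [true]) b, List.append_assoc, List.singleton_append]
  rw [openStep, closedStep, hmoves, Multiset.map_map]
  refine Multiset.map_congr rfl fun m hm ↦ ?_
  have hm2 := (List.getElem?_eq_some_iff.mp (mem_moves.mp hm).2).1
  rw [List.length_append, List.length_singleton] at hm2
  have hlt : m.2 < (w ++ true :: List.replicate b false).length := by
    rw [List.length_append, List.length_cons]
    omega
  rw [Function.comp_apply, nextWord, nextWord, if_pos hlt,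
    List.cons_append, List.append_assoc, List.drop_append_of_le_length (by omega)]
  rcases Nat.lt_succ_iff_lt_or_eq.mp hm2 with h | h
  · rw [if_pos h]
  · rw [if_neg h.not_lt, h, List.drop_length, List.replicate_zero]

lemma closedStep_replicate_false (b : ℕ) : closedStep (List.replicate b false) = 0 := by
  have : moves (List.replicate b false) = ∅ := by
    simpa [moves] using moves_append_replicate_false [] b
  rw [closedStep, this, Finset.empty_val, Multiset.map_zero]

/-! ### Generating functions of words -/

open scoped Polynomial PowerSeries

section WalkSeries

/-- The variable marking the length of words. -/
local notation "u" => (PowerSeries.C (Polynomial.X : ℤ[X]) : ℤ[X]⟦X⟧)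

/-- The variable marking the number of steps. -/
local notation "z" => (PowerSeries.X : ℤ[X]⟦X⟧)

/-- Generating function of the descendants of `w`: the coefficient of `z ^ k` is the sum of
`u ^ |v|` over the words `v` at depth `k`. -/
noncomputable def walkSeries (step : List Bool → Multiset (List Bool)) (w : List Bool) : ℤ[X]⟦X⟧ :=
  PowerSeries.mk fun k ↦ ((descendants step k w).map fun v ↦ (Polynomial.X : ℤ[X]) ^ v.length).sum

lemma walkSeries_eq (step : List Bool → Multiset (List Bool)) (w : List Bool) :
    walkSeries step w = u ^ w.length + z * ((step w).map (walkSeries step)).sum := by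
  ext1 k
  cases k with
  | zero => simp [walkSeries, descendants]
  | succ k =>
    have hu : PowerSeries.coeff (k + 1) (u ^ w.length) = 0 := by
      rw [← map_pow, PowerSeries.coeff_C, if_neg k.succ_ne_zero]
    rw [map_add, hu, zero_add, PowerSeries.coeff_succ_X_mul, map_multiset_sum, Multiset.map_map,
      walkSeries, PowerSeries.coeff_mk, descendants, Multiset.map_bind, Multiset.sum_bind]
    simp only [Function.comp_def, walkSeries, PowerSeries.coeff_mk]

lemma walkSeries_closedStep_append (w : List Bool) (b : ℕ) :
    walkSeries closedStep (w ++ true :: List.replicate b false) =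
      u ^ (b + 1) * walkSeries (openStep 0) w := by
  ext1 k
  rw [← map_pow, PowerSeries.coeff_C_mul, walkSeries, walkSeries, PowerSeries.coeff_mk,
    PowerSeries.coeff_mk, ← map_descendants (map_append_openStep_zero b), Multiset.map_map,
    ← Multiset.sum_map_mul_left]
  simp [pow_add, mul_comm]

lemma walkSeries_closedStep_replicate_false (b : ℕ) :
    walkSeries closedStep (List.replicate b false) = u ^ b := by
  rw [walkSeries_eq, closedStep_replicate_false, Multiset.map_zero, Multiset.sum_zero, mul_zero,
    add_zero, List.length_replicate]

lemma walkSeries_closedStep_nil : walkSeries closedStep [] = 1 :=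
  walkSeries_closedStep_replicate_false 0

lemma eq_zero_of_forall_X_pow_dvd {R : Type*} [Semiring R] {f : R⟦X⟧}
    (h : ∀ n, (PowerSeries.X : R⟦X⟧) ^ n ∣ f) : f = 0 := by
  ext n
  exact PowerSeries.X_pow_dvd_iff.mp (h (n + 1)) n n.lt_succ_self

lemma eq_zero_of_eq_X_mul_sum {R α : Type*} [CommSemiring R] {step : α → Multiset α} {f : α → R⟦X⟧}
    (h : ∀ a, f a = PowerSeries.X * ((step a).map f).sum) (a : α) : f a = 0 := by
  refine eq_zero_of_forall_X_pow_dvd fun n ↦ ?_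
  induction n generalizing a with
  | zero => exact one_dvd _
  | succ n ih =>
    rw [h, pow_succ']
    refine mul_dvd_mul_left _ (Multiset.dvd_sum fun g hg ↦ ?_)
    obtain ⟨b, -, rfl⟩ := Multiset.mem_map.mp hg
    exact ih b

/-- Evaluation of the length variable at `1`. -/
noncomputable def evalOne : ℤ[X]⟦X⟧ →+* ℤ[X]⟦X⟧ :=
  PowerSeries.map (Polynomial.C.comp (Polynomial.evalRingHom 1))

@[simp] lemma evalOne_u : evalOne u = 1 := by simp [evalOne]

@[simp] lemma evalOne_z : evalOne z = z := PowerSeries.map_X _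

lemma evalOne_walkSeries (step : List Bool → Multiset (List Bool)) (w : List Bool) :
    evalOne (walkSeries step w) =
      PowerSeries.mk fun k ↦ ((descendants step k w).card : ℤ[X]) := by
  ext1 k
  rw [evalOne, PowerSeries.coeff_map, walkSeries, PowerSeries.coeff_mk, PowerSeries.coeff_mk,
    map_multiset_sum, Multiset.map_map]
  simp [Function.comp_def]

lemma u_sub_one_dvd_of_evalOne_eq_zero {f : ℤ[X]⟦X⟧} (h : evalOne f = 0) : u - 1 ∣ f := by
  have hdvd (n : ℕ) : (Polynomial.X - 1 : ℤ[X]) ∣ PowerSeries.coeff n f := by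
    rw [← Polynomial.C_1, Polynomial.dvd_iff_isRoot]
    simpa [evalOne] using congrArg (PowerSeries.coeff n) h
  choose g hg using hdvd
  refine ⟨PowerSeries.mk g, ?_⟩
  ext1 n
  rw [← map_one PowerSeries.C, ← map_sub, PowerSeries.coeff_C_mul, PowerSeries.coeff_mk, hg]

lemma not_z_dvd_u_sub_one : ¬ z ∣ u - 1 := by
  rw [PowerSeries.X_dvd_iff]
  simpa [sub_eq_zero] using Polynomial.X_ne_C (1 : ℤ)

lemma eq_zero_of_sub_one_mul_eq {δ M N : ℤ[X]⟦X⟧}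
    (h : (u - 1) * δ = z * (M * δ + N * evalOne δ)) : δ = 0 := by
  refine eq_zero_of_forall_X_pow_dvd fun n ↦ ?_
  induction n with
  | zero => exact one_dvd _
  | succ n ih =>
    have hE : z ^ n ∣ evalOne δ := by simpa using map_dvd evalOne ih
    refine PowerSeries.X_prime.pow_dvd_of_dvd_mul_left _ not_z_dvd_u_sub_one ?_
    rw [h, pow_succ']
    exact mul_dvd_mul_left _ (dvd_add (ih.mul_left _) (hE.mul_left _))

/-- The operator of the kernel method for `walkSeries (openStep κ)`: only the moves to the end of a
word contribute to it, the other ones being accounted for by `walkSeries closedStep`. -/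
noncomputable def kernelMap (κ : ℕ) : ℤ[X]⟦X⟧ →+ ℤ[X]⟦X⟧ :=
  AddMonoidHom.mk' (fun f ↦ (u - 1) * f - z * u ^ (κ + 1) *
    ((u - 1) * walkSeries (openStep 0) [] * f + f - evalOne f)) fun f g ↦ by rw [map_add]; ring

lemma kernelMap_apply (κ : ℕ) (f : ℤ[X]⟦X⟧) : kernelMap κ f = (u - 1) * f - z * u ^ (κ + 1) *
    ((u - 1) * walkSeries (openStep 0) [] * f + f - evalOne f) := rfl

lemma kernelMap_z_mul (κ : ℕ) (f : ℤ[X]⟦X⟧) : kernelMap κ (z * f) = z * kernelMap κ f := by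
  rw [kernelMap_apply, kernelMap_apply, map_mul, evalOne_z]
  ring

lemma sub_one_mul_sum_walkSeries_closedStep (κ a : ℕ) :
    (u - 1) * ∑ p ∈ Finset.range (a + 1),
        walkSeries closedStep (decide (p = 0) :: List.replicate (a - p + κ) false) =
      u ^ (κ + 1) * ((u - 1) * walkSeries (openStep 0) [] * u ^ a + u ^ a - 1) := by
  have hzero : walkSeries closedStep (decide (0 = 0) :: List.replicate (a - 0 + κ) false) =
      u ^ (a + κ + 1) * walkSeries (openStep 0) [] :=
    walkSeries_closedStep_append [] (a + κ)
  have hsucc (p : ℕ) (_ : p ∈ Finset.range a) : walkSeries closedStep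
      (decide (p + 1 = 0) :: List.replicate (a - (p + 1) + κ) false) =
        u ^ (κ + 1) * u ^ (a - 1 - p) := by
    have := walkSeries_closedStep_replicate_false (a - (p + 1) + κ + 1)
    rw [List.replicate_succ] at this
    rw [decide_eq_false p.succ_ne_zero, this, ← pow_add]
    congr 1
    omega
  rw [Finset.sum_range_succ', hzero, Finset.sum_congr rfl hsucc, ← Finset.mul_sum,
    Finset.sum_range_reflect (fun i ↦ u ^ i)]
  linear_combination u ^ (κ + 1) * mul_geom_sum u a

lemma kernelMap_walkSeries (κ : ℕ) (w : List Bool) :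
    kernelMap κ (walkSeries (openStep κ) w) = (u - 1) * walkSeries closedStep w := by
  rw [← sub_eq_zero]
  refine eq_zero_of_eq_X_mul_sum (step := openStep κ)
    (f := fun w ↦ kernelMap κ (walkSeries (openStep κ) w) - (u - 1) * walkSeries closedStep w)
    (fun w ↦ ?_) w
  rw [Multiset.sum_map_sub, Multiset.sum_map_mul_left, sum_map_openStep κ w (walkSeries closedStep),
    mul_add (u - 1), sub_one_mul_sum_walkSeries_closedStep, walkSeries_eq closedStep w,
    walkSeries_eq (openStep κ) w, map_add, kernelMap_z_mul, map_multiset_sum, Multiset.map_map,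
    kernelMap_apply, map_pow, evalOne_u, one_pow]
  simp only [Function.comp_def]
  ring

/-! ### Solution of the kernel equation -/

lemma eq_of_eq_add_mul_sq {R : Type*} [CommRing R] [IsDomain R] {a w f g : R⟦X⟧}
    (hw : PowerSeries.constantCoeff w = 0) (hf : f = a + w * f ^ 2) (hg : g = a + w * g ^ 2) :
    f = g := by
  have hne : 1 - w * (f + g) ≠ 0 := fun h ↦ by
    simpa [hw] using congrArg PowerSeries.constantCoeff h
  have hmul : (f - g) * (1 - w * (f + g)) = 0 := by linear_combination hf - hg
  exact sub_eq_zero.mp ((mul_eq_zero.mp hmul).resolve_right hne)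

/-- The Catalan generating function evaluated at a power series `w` without constant term. -/
noncomputable def catalanSubst (w : ℤ[X]⟦X⟧) : ℤ[X]⟦X⟧ :=
  (PowerSeries.catalanSeries.map (Nat.castRingHom ℤ[X])).subst w

lemma catalanSubst_eq {w : ℤ[X]⟦X⟧} (hw : PowerSeries.constantCoeff w = 0) :
    catalanSubst w = 1 + w * catalanSubst w ^ 2 := by
  have hsubst := PowerSeries.HasSubst.of_constantCoeff_zero' hw
  have h := congrArg (fun f ↦ PowerSeries.substAlgHom hsubst
    (PowerSeries.map (Nat.castRingHom ℤ[X]) f)) PowerSeries.catalanSeries_sq_mul_X_add_one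
  simp only [map_add, map_mul, map_pow, map_one, PowerSeries.map_X, PowerSeries.substAlgHom_X,
    PowerSeries.coe_substAlgHom] at h
  rw [catalanSubst]
  linear_combination -h

/-- The series `t = 1 + 2 z t ^ 2`, which counts self-dual modern intervals of odd size. -/
noncomputable def oddSeries : ℤ[X]⟦X⟧ := catalanSubst (2 * z)

/-- The series `s = 1 + z t ^ 2`, which counts self-dual modern intervals of even size. -/
noncomputable def evenSeries : ℤ[X]⟦X⟧ := 1 + z * oddSeries ^ 2

lemma coeff_oddSeries (n : ℕ) :
    PowerSeries.coeff n oddSeries = ((2 ^ n * catalan n : ℕ) : ℤ[X]) := by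
  have h : oddSeries =
      PowerSeries.rescale 2 (PowerSeries.catalanSeries.map (Nat.castRingHom ℤ[X])) := by
    rw [oddSeries, catalanSubst, PowerSeries.rescale_eq_subst, PowerSeries.smul_eq_C_mul, map_ofNat]
  simp [h]

lemma oddSeries_eq : oddSeries = 1 + 2 * z * oddSeries ^ 2 :=
  catalanSubst_eq (by simp)

lemma oddSeries_eq_evenSeries_add : oddSeries = evenSeries + z * oddSeries ^ 2 := by
  rw [evenSeries]
  linear_combination oddSeries_eq

@[simp] lemma evalOne_oddSeries : evalOne oddSeries = oddSeries := by
  have h := congrArg evalOne oddSeries_eq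
  simp only [map_add, map_mul, map_pow, map_one, map_ofNat, evalOne_z] at h
  have hw : PowerSeries.constantCoeff (2 * z) = 0 := by simp
  exact eq_of_eq_add_mul_sq hw h oddSeries_eq

@[simp] lemma evalOne_evenSeries : evalOne evenSeries = evenSeries := by simp [evenSeries]

/-- The series `c = 1 + z s u c ^ 2`, in terms of which the kernel factors. -/
noncomputable def branchSeries : ℤ[X]⟦X⟧ := catalanSubst (z * evenSeries * u)

lemma branchSeries_eq : branchSeries = 1 + z * evenSeries * u * branchSeries ^ 2 :=
  catalanSubst_eq (by simp)

lemma evenSeries_mul_evalOne_branchSeries : evenSeries * evalOne branchSeries = oddSeries := by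
  refine eq_of_eq_add_mul_sq PowerSeries.constantCoeff_X ?_ oddSeries_eq_evenSeries_add
  have h := congrArg evalOne branchSeries_eq
  simp only [map_add, map_mul, map_pow, map_one, evalOne_u, evalOne_z, evalOne_evenSeries] at h
  linear_combination evenSeries * h

/-- Closed form of `(u - 1) * walkSeries (openStep 0) []`. -/
noncomputable def kernelSeries : ℤ[X]⟦X⟧ :=
  evenSeries - 1 - evenSeries * branchSeries * (1 - (1 - z * oddSeries) * u)

lemma evalOne_kernelSeries : evalOne kernelSeries = 0 := by
  simp only [kernelSeries, map_sub, map_mul, map_one, evalOne_evenSeries,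
    evenSeries_mul_evalOne_branchSeries, evalOne_u, evalOne_z, evalOne_oddSeries]
  rw [evenSeries]
  ring

lemma sub_one_mul_kernelSeries : (u - 1) * kernelSeries = (u - 1) ^ 2 + z * u * kernelSeries ^ 2 +
    z * u * (kernelSeries - (u - 1) * (3 * evenSeries - 1 - evenSeries ^ 2)) := by
  have ht : oddSeries = 2 * evenSeries - 1 := by
    rw [evenSeries]
    linear_combination oddSeries_eq
  have hs : evenSeries = 1 + z * (2 * evenSeries - 1) ^ 2 := by
    rw [← ht, evenSeries]
  rw [kernelSeries, ht]
  linear_combination evenSeries * (1 - (1 - z * (2 * evenSeries - 1)) * u) ^ 2 * branchSeries_eq +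
    (u ^ 2 - u - evenSeries * z * u ^ 2) * hs

lemma u_sub_one_ne_zero : u - 1 ≠ 0 := fun h ↦ not_z_dvd_u_sub_one (h ▸ dvd_zero _)

lemma sub_one_mul_walkSeries_openStep_zero :
    (u - 1) * walkSeries (openStep 0) [] = kernelSeries := by
  obtain ⟨f, hf⟩ := u_sub_one_dvd_of_evalOne_eq_zero evalOne_kernelSeries
  set a := walkSeries (openStep 0) [] with ha
  have hkernel : (u - 1) * f = (u - 1) +
      z * u * ((u - 1) * f ^ 2 + f - (3 * evenSeries - 1 - evenSeries ^ 2)) := by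
    refine mul_left_cancel₀ u_sub_one_ne_zero ?_
    have := sub_one_mul_kernelSeries
    rw [hf] at this
    linear_combination this
  have hevalOne : evalOne f = 3 * evenSeries - 1 - evenSeries ^ 2 := by
    have h := congrArg evalOne hkernel
    simp only [map_add, map_sub, map_mul, map_pow, map_one, map_ofNat, evalOne_u, evalOne_z,
      evalOne_evenSeries] at h
    refine mul_left_cancel₀ PowerSeries.X_ne_zero ?_
    linear_combination -h
  have hwalk : (u - 1) * a = (u - 1) + z * u * ((u - 1) * a ^ 2 + a - evalOne a) := by
    have h := kernelMap_walkSeries 0 []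
    rw [kernelMap_apply, ← ha] at h
    linear_combination h + (u - 1) * walkSeries_closedStep_nil
  have hsub : a - f = 0 := by
    refine eq_zero_of_sub_one_mul_eq (M := u * ((u - 1) * (a + f) + 1)) (N := -u) ?_
    rw [map_sub]
    linear_combination hwalk - hkernel - z * u * hevalOne
  rw [hf, sub_eq_zero.mp hsub]

lemma kernelMap_one (f : ℤ[X]⟦X⟧) : kernelMap 1 f =
    (1 - z * oddSeries * u - z * evenSeries * u ^ 2 * branchSeries) *
      (u - 1 - z * oddSeries * u) * f + z * u ^ 2 * evalOne f := by
  rw [kernelMap_apply, sub_one_mul_walkSeries_openStep_zero, kernelSeries]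
  linear_combination z * u ^ 2 * f * oddSeries_eq_evenSeries_add

lemma evalOne_eq_of_kernelMap_one_eq {f r v : ℤ[X]⟦X⟧}
    (h : kernelMap 1 f = r * (u - 1 - z * oddSeries * u) + z * u ^ 2 * v)
    (hv : evalOne v = v) (hr : evalOne r = (1 - 2 * z * oddSeries) * v) : evalOne f = v := by
  set d := 1 - z * oddSeries * u - z * evenSeries * u ^ 2 * branchSeries
  have hd : evalOne d = 1 - 2 * z * oddSeries := by
    simp only [d, map_sub, map_mul, map_pow, map_one, evalOne_u, evalOne_z, evalOne_oddSeries,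
      evalOne_evenSeries]
    linear_combination -z * evenSeries_mul_evalOne_branchSeries
  have hevalOne : evalOne (d * f - r) = (1 - 2 * z * oddSeries) * (evalOne f - v) := by
    rw [map_sub, map_mul, hd, hr]
    ring
  have hzero : d * f - r = 0 := by
    refine eq_zero_of_sub_one_mul_eq (M := oddSeries * u) (N := -u ^ 2 * oddSeries) ?_
    rw [kernelMap_one] at h
    rw [hevalOne]
    linear_combination h + z * u ^ 2 * (evalOne f - v) * oddSeries_eq
  rw [hzero, map_zero] at hevalOne
  linear_combination -oddSeries * hevalOne - (evalOne f - v) * oddSeries_eq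

lemma evalOne_walkSeries_openStep_one_singleton :
    evalOne (walkSeries (openStep 1) [false]) = oddSeries := by
  refine evalOne_eq_of_kernelMap_one_eq (r := u) ?_ evalOne_oddSeries ?_
  · rw [kernelMap_walkSeries, show [false] = List.replicate 1 false from rfl,
      walkSeries_closedStep_replicate_false]
    ring
  · rw [evalOne_u]
    linear_combination -oddSeries_eq

lemma evalOne_walkSeries_openStep_one_nil :
    evalOne (walkSeries (openStep 1) []) = evenSeries := by
  refine evalOne_eq_of_kernelMap_one_eq (r := 1 - z * oddSeries * u) ?_ evalOne_evenSeries ?_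
  · rw [kernelMap_walkSeries, walkSeries_closedStep_nil, evenSeries]
    linear_combination z * u ^ 2 * oddSeries_eq
  · simp only [map_sub, map_mul, map_one, evalOne_u, evalOne_z, evalOne_oddSeries]
    rw [evenSeries]
    linear_combination -z * oddSeries * oddSeries_eq

lemma card_descendants_openStep_one_singleton (k : ℕ) :
    (descendants (openStep 1) k [false]).card = 2 ^ k * catalan k := by
  have h := congrArg (PowerSeries.coeff k) evalOne_walkSeries_openStep_one_singleton
  rw [evalOne_walkSeries, PowerSeries.coeff_mk, coeff_oddSeries] at h
  exact_mod_cast h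

lemma card_descendants_openStep_one_nil (k : ℕ) :
    (descendants (openStep 1) (k + 1) []).card = 2 ^ k * catalan (k + 1) := by
  have hs : 2 * evenSeries = oddSeries + 1 := by
    rw [evenSeries]
    linear_combination -oddSeries_eq
  have h := congrArg (PowerSeries.coeff (k + 1)) hs
  rw [← evalOne_walkSeries_openStep_one_nil, evalOne_walkSeries, two_mul, map_add, map_add,
    PowerSeries.coeff_mk, coeff_oddSeries, PowerSeries.coeff_one, if_neg k.succ_ne_zero,
    add_zero] at h
  norm_cast at h
  rw [pow_succ', mul_assoc] at h
  omega

end WalkSeries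

namespace BT

lemma ncard_isSelfDualModern_odd (k : ℕ) :
    {T : BT | T.size = 2 * k + 1 ∧ IsSelfDualModern T}.ncard = 2 ^ k * catalan k := by
  have hword : word (node leaf leaf) = [false] := by
    simp [word, leftSizes, size, Active]
  rw [← card_descendants_openStep_one_singleton, ← hword, ← ncard_isSelfDualModern le_rfl,
    add_comm]
  rfl

lemma ncard_isSelfDualModern_even (k : ℕ) :
    {T : BT | T.size = 2 * (k + 1) ∧ IsSelfDualModern T}.ncard = 2 ^ k * catalan (k + 1) := by
  rw [← card_descendants_openStep_one_nil, ← show word leaf = [] from rfl,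
    ← ncard_isSelfDualModern zero_le_one, size, zero_add]

end BT

theorem count_self_dual_modern_intervals (k : ℕ) :
    (1 ≤ k →
      (k + 1) *
          Set.ncard {p : BT × BT | BT.interval p (2 * k) ∧ BT.modern p ∧ BT.selfDual p} =
        2 ^ (k - 1) * Nat.choose (2 * k) k) ∧
    (k + 1) *
        Set.ncard {p : BT × BT | BT.interval p (2 * k + 1) ∧ BT.modern p ∧ BT.selfDual p} =
      2 ^ k * Nat.choose (2 * k) k := by
  rw [BT.ncard_selfDual_modern, BT.ncard_selfDual_modern, ← Nat.centralBinom_eq_two_mul_choose,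
    ← succ_mul_catalan_eq_centralBinom]
  constructor
  · intro hk
    obtain ⟨k, rfl⟩ := Nat.exists_eq_add_of_le' hk
    rw [BT.ncard_isSelfDualModern_even, Nat.add_sub_cancel, mul_left_comm]
  · rw [BT.ncard_isSelfDualModern_odd, mul_left_comm]
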